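/- Let (S_x)_{x∈Ω} be a finite family of d×d complex matrices with Σ_{x∈Ω} S_x* S_x = 1, and suppose the associated Kraus instrument implements the identity channel: Σ_{x∈Ω} S_x ρ S_x* = ρ for every state ρ. Then every Kraus operator is a scalar multiple of the identity: for each x ∈ Ω there exists c_x ∈ ℂ with S_x = c_x·1; equivalently, the instrument x ↦ S_x ρ S_x* is an identity instrument with S_x ρ S_x* = |c_x|² ρ and Σ_x |c_x|² = 1. -/

import Mathlib

/-! The Kraus decomposition of a pure state is a sum of positive rank-one matrices. If `v ≠ 0` and
`w ⟂ v`, then evaluating `∑ₓ Sₓ v v* Sₓ* = v v*` on the quadratic form at `w` gives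
`∑ₓ |⟨w, Sₓ v⟩|² = |⟨w, v⟩|² = 0`, so `⟨w, Sₓ v⟩ = 0` for every `x`
(`kraus_preserves_orthogonality`). A matrix `A` such that `⟨w, A v⟩ = 0` whenever `⟨w, v⟩ = 0` is
scalar (`scalar_of_preserves_orthogonality`): the pairs `(eᵢ, eⱼ)` make it diagonal, the pairs
`(eᵢ + eⱼ, eᵢ - eⱼ)` make the diagonal constant. The normalization `∑ₓ |cₓ|² = 1` is then a
diagonal entry of `∑ₓ Sₓ* Sₓ = 1`.
-/

open Matrix BigOperators
open scoped ComplexOrder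

theorem quadForm_vecMulVec {d : ℕ} (w a : Fin d → ℂ) :
    star w ⬝ᵥ (vecMulVec a (star a) *ᵥ w) = (Complex.normSq (star w ⬝ᵥ a) : ℂ) := by
  have h : star (star w ⬝ᵥ a) = star a ⬝ᵥ w := (star_dotProduct a w).symm
  rw [vecMulVec_mulVec, Complex.normSq_eq_conj_mul_self, starRingEnd_apply, h, op_smul_eq_smul,
    dotProduct_smul, smul_eq_mul]

theorem kraus_preserves_orthogonality {d : ℕ} {Ω : Type*} [Fintype Ω]
    (S : Ω → Matrix (Fin d) (Fin d) ℂ)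
    (hid : ∀ (ρ : Matrix (Fin d) (Fin d) ℂ), ρ.PosSemidef → ρ.trace = 1 →
      ∑ x, S x * ρ * (S x)ᴴ = ρ)
    (v w : Fin d → ℂ) (hv : v ≠ 0) (hw : star w ⬝ᵥ v = 0) (x : Ω) :
    star w ⬝ᵥ (S x *ᵥ v) = 0 := by
  have hpos : 0 < v ⬝ᵥ star v := dotProduct_self_star_pos_iff.2 hv
  -- Normalize `v v*` to a state, then clear the normalizing constant.
  have h1 := hid ((v ⬝ᵥ star v)⁻¹ • vecMulVec v (star v))
    ((posSemidef_vecMulVec_self_star v).smul (inv_nonneg.2 hpos.le))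
    (by rw [trace_smul, trace_vecMulVec, smul_eq_mul, inv_mul_cancel₀ hpos.ne'])
  simp only [Matrix.mul_smul, Matrix.smul_mul, ← Finset.smul_sum] at h1
  have h2 := smul_right_injective _ (inv_ne_zero hpos.ne') h1
  have h3 : ∑ y, vecMulVec (S y *ᵥ v) (star (S y *ᵥ v)) = vecMulVec v (star v) := by
    rw [← h2]
    refine Finset.sum_congr rfl fun y _ => ?_
    rw [mul_vecMulVec, vecMulVec_mul, star_mulVec]
  have h4 := congrArg (fun M => star w ⬝ᵥ (M *ᵥ w)) h3
  simp only [sum_mulVec, dotProduct_sum, quadForm_vecMulVec, hw, map_zero] at h4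
  have h5 : ∑ y, Complex.normSq (star w ⬝ᵥ (S y *ᵥ v)) = 0 := by exact_mod_cast h4
  exact Complex.normSq_eq_zero.1
    ((Finset.sum_eq_zero_iff_of_nonneg fun y _ => Complex.normSq_nonneg _).1 h5 x
      (Finset.mem_univ x))

theorem scalar_of_preserves_orthogonality {d : ℕ} (A : Matrix (Fin d) (Fin d) ℂ)
    (hA : ∀ v w : Fin d → ℂ, v ≠ 0 → star w ⬝ᵥ v = 0 → star w ⬝ᵥ (A *ᵥ v) = 0) (k : Fin d) :
    A = A k k • (1 : Matrix (Fin d) (Fin d) ℂ) := by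
  have hoff : ∀ i j, i ≠ j → A i j = 0 := by
    intro i j hij
    have := hA (Pi.single j 1) (Pi.single i 1) (by simp) (by simp [hij])
    simpa [← Pi.single_star] using this
  have hdiag : ∀ i, A i i = A k k := by
    intro i
    by_cases hik : i = k
    · rw [hik]
    have := hA (Pi.single i 1 + Pi.single k 1) (Pi.single i 1 - Pi.single k 1)
      (fun h => by simpa [hik] using congrFun h i)
      (by simp [hik, Ne.symm hik])
    simp [sub_dotProduct, mulVec_add, hoff i k hik,
      hoff k i (Ne.symm hik)] at this
    linear_combination this
  ext i j
  by_cases hij : i = j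
  · subst hij
    simp [hdiag i]
  · simp [hoff i j hij, hij]

/-- If a Kraus instrument implements the identity channel (`Σ_x S_x ρ S_x* = ρ` for every
state `ρ`, with `Σ_x S_x* S_x = 1`), then each Kraus operator is a scalar multiple of the
identity: `S_x = c_x·1`, so `S_x ρ S_x* = |c_x|² ρ` and `Σ_x |c_x|² = 1`. -/
theorem kraus_identity_channel {d : ℕ} (hd : 0 < d) {Ω : Type*} [Fintype Ω]
    (S : Ω → Matrix (Fin d) (Fin d) ℂ)
    (hS : ∑ x, (S x)ᴴ * S x = (1 : Matrix (Fin d) (Fin d) ℂ))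
    (hid : ∀ (ρ : Matrix (Fin d) (Fin d) ℂ), ρ.PosSemidef → ρ.trace = 1 →
      ∑ x, S x * ρ * (S x)ᴴ = ρ) :
    ∃ c : Ω → ℂ,
      (∀ x, S x = c x • (1 : Matrix (Fin d) (Fin d) ℂ)) ∧
      (∀ (x : Ω) (ρ : Matrix (Fin d) (Fin d) ℂ), ρ.PosSemidef → ρ.trace = 1 →
        S x * ρ * (S x)ᴴ = (Complex.normSq (c x) : ℂ) • ρ) ∧
      (∑ x, Complex.normSq (c x) = 1) := by
  have hc : ∀ x, S x = S x ⟨0, hd⟩ ⟨0, hd⟩ • (1 : Matrix (Fin d) (Fin d) ℂ) := fun x =>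
    scalar_of_preserves_orthogonality (S x)
      (fun v w hv hw => kraus_preserves_orthogonality S hid v w hv hw x) ⟨0, hd⟩
  generalize hcdef : (fun x => S x ⟨0, hd⟩ ⟨0, hd⟩) = c at *
  replace hc : ∀ x, S x = c x • (1 : Matrix (Fin d) (Fin d) ℂ) := by
    intro x
    rw [← hcdef]
    exact hc x
  refine ⟨c, hc, fun x ρ _ _ => ?_, ?_⟩
  · rw [hc x, Complex.normSq_eq_conj_mul_self]
    simp [smul_smul]
  · have h := congrFun (congrFun hS ⟨0, hd⟩) ⟨0, hd⟩
    simp only [hc, conjTranspose_smul, conjTranspose_one, Matrix.mul_smul, smul_smul,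
      Matrix.sum_apply, Matrix.smul_apply, one_apply_eq, smul_eq_mul, mul_one] at h
    have h' : ((∑ x, Complex.normSq (c x) : ℝ) : ℂ) = 1 := by
      rw [← h]
      push_cast
      exact Finset.sum_congr rfl fun x _ => (Complex.mul_conj (c x)).symm
    exact_mod_cast h'
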